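/- Let F₁ ∈ span{e⁴,e⁵,e⁶,e⁷} ⊂ V* and F₂ ∈ span{e^i∧e^a : 1≤i≤3, 4≤a≤7} ⊂ Λ²V*, and set F = e⁰∧F₁ + F₂ ∈ Λ²(ℝ⁸)*. Then: (i) 2·π²₇( F − (1/6)·*₈F³ ) = λ²( *₇( *₇φ∧F₂ − (1/6)F₂³ + (1 − ½·*₇(φ∧F₂²))·*₇F₁ − *₇(F₁∧F₂∧φ) ∧ *₇F₂ ) ); and (ii) √8·π⁴₇( F² ) = λ⁴( *₇( 2·F₁∧F₂∧φ − φ∧*₇(F₂²) ) ). -/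

import Mathlib

open scoped BigOperators

noncomputable section

namespace FMpaper

variable {K : Type*} [NormedField K] [NormedAlgebra ℝ K]

/-- Coefficient model for the exterior algebra of `(ℝⁿ)*` with scalars in `K`:
a form is given by its coefficients on the basis `e^S`, `S ⊆ {0, …, n-1}` sorted. -/
abbrev Form (K : Type*) (n : ℕ) := Finset (Fin n) → K

variable {n : ℕ}

/-- Sign such that `e^s ∧ e^t = signMerge s t • e^(s ∪ t)` for disjoint sorted `s, t`. -/
def signMerge (s t : Finset (Fin n)) : K :=
  (-1 : K) ^ (((s ×ˢ t).filter (fun p => p.2 < p.1)).card)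

/-- Wedge product. -/
def wedge (α β : Form K n) : Form K n :=
  fun u => ∑ s ∈ u.powerset, signMerge s (u \ s) * α s * β (u \ s)

/-- Hodge star operator (for the standard inner product and orientation `e^{0⋯(n-1)}`). -/
def hstar (α : Form K n) : Form K n :=
  fun t => signMerge tᶜ t * α tᶜ

/-- Interior product with the basis vector `e_μ`. -/
def iprodB (μ : Fin n) (α : Form K n) : Form K n :=
  fun t => if μ ∈ t then 0
    else (-1 : K) ^ ((t.filter (fun j => j < μ)).card) * α (insert μ t)

/-- Interior product with the vector `v`. -/
def iprod (v : Fin n → K) (α : Form K n) : Form K n :=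
  fun t => ∑ μ, v μ * iprodB μ α t

/-- The basis covector `e^i` as a 1-form. -/
def e1 (i : Fin n) : Form K n := fun s => if s = {i} then 1 else 0

/-- The covector `v♭` dual to a vector `v`. -/
def flat (v : Fin n → K) : Form K n := ∑ i, v i • e1 i

/-- The vector `α♯` dual to a 1-form `α`. -/
def sharp1 (α : Form K n) : Fin n → K := fun i => α {i}

/-- The inner product of forms (extended `K`-bilinearly). -/
def inner' (α β : Form K n) : K := ∑ s, α s * β s

/-- The (Euclidean) norm of a form; for an `√-1 ℝ`-valued form `√-1 γ` this is `‖γ‖`. -/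
def fnorm (α : Form K n) : ℝ := Real.sqrt (∑ s, ‖α s‖ ^ 2)

/-- `α` is homogeneous of degree `k`. -/
def isGrade (k : ℕ) (α : Form K n) : Prop := ∀ s, s.card ≠ k → α s = 0

/-- Evaluation of a `k`-form on `k` vectors. -/
def evalForm {k : ℕ} (α : Form K n) (v : Fin k → (Fin n → K)) : K :=
  ∑ s : Finset (Fin n), α s *
    (if h : s.card = k then
      Matrix.det (Matrix.of fun i j => v i ((s.orderIsoOfFin h j : Fin n))) else 0)

/-- The matrix of the skew-symmetric endomorphism `γ♯` associated with a 2-form `γ`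
via `⟨γ♯ u, v⟩ = γ(u, v)`. -/
def mat2 (γ : Form K n) : Matrix (Fin n) (Fin n) K :=
  Matrix.of fun i j => if i < j then γ {i, j} else if j < i then - γ {i, j} else 0

/-- The standard `G₂` 3-form `φ = e^{123}+e^{145}+e^{167}+e^{246}−e^{257}−e^{347}−e^{356}`
on `ℝ⁷` (indices `1, …, 7` shifted to `0, …, 6`). -/
def phi7 : Form K 7 := fun s =>
  if s = ({0, 1, 2} : Finset (Fin 7)) then 1
  else if s = ({0, 3, 4} : Finset (Fin 7)) then 1
  else if s = ({0, 5, 6} : Finset (Fin 7)) then 1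
  else if s = ({1, 3, 5} : Finset (Fin 7)) then 1
  else if s = ({1, 4, 6} : Finset (Fin 7)) then -1
  else if s = ({2, 3, 6} : Finset (Fin 7)) then -1
  else if s = ({2, 4, 5} : Finset (Fin 7)) then -1
  else 0

/-- `*₇φ = e^{4567}+e^{2367}+e^{2345}+e^{1357}−e^{1346}−e^{1256}−e^{1247}` on `ℝ⁷`. -/
def psi7 : Form K 7 := fun s =>
  if s = ({3, 4, 5, 6} : Finset (Fin 7)) then 1
  else if s = ({1, 2, 5, 6} : Finset (Fin 7)) then 1
  else if s = ({1, 2, 3, 4} : Finset (Fin 7)) then 1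
  else if s = ({0, 2, 4, 6} : Finset (Fin 7)) then 1
  else if s = ({0, 2, 3, 5} : Finset (Fin 7)) then -1
  else if s = ({0, 1, 4, 5} : Finset (Fin 7)) then -1
  else if s = ({0, 1, 3, 6} : Finset (Fin 7)) then -1
  else 0

/-- The `G₂` 3-form `φ` on `V = span{e₁, …, e₇} ⊂ ℝ⁸`, regarded as a form on `ℝ⁸`
annihilated by `i(e₀)` (indices `1, …, 7` of `ℝ⁸`). -/
def phi8 : Form K 8 := fun s =>
  if s = ({1, 2, 3} : Finset (Fin 8)) then 1
  else if s = ({1, 4, 5} : Finset (Fin 8)) then 1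
  else if s = ({1, 6, 7} : Finset (Fin 8)) then 1
  else if s = ({2, 4, 6} : Finset (Fin 8)) then 1
  else if s = ({2, 5, 7} : Finset (Fin 8)) then -1
  else if s = ({3, 4, 7} : Finset (Fin 8)) then -1
  else if s = ({3, 5, 6} : Finset (Fin 8)) then -1
  else 0

/-- `*₇φ` on `V ⊂ ℝ⁸`, regarded as a 4-form on `ℝ⁸` annihilated by `i(e₀)`. -/
def psi8 : Form K 8 := fun s =>
  if s = ({4, 5, 6, 7} : Finset (Fin 8)) then 1
  else if s = ({2, 3, 6, 7} : Finset (Fin 8)) then 1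
  else if s = ({2, 3, 4, 5} : Finset (Fin 8)) then 1
  else if s = ({1, 3, 5, 7} : Finset (Fin 8)) then 1
  else if s = ({1, 3, 4, 6} : Finset (Fin 8)) then -1
  else if s = ({1, 2, 5, 6} : Finset (Fin 8)) then -1
  else if s = ({1, 2, 4, 7} : Finset (Fin 8)) then -1
  else 0

/-- The standard Cayley 4-form `Φ = e⁰ ∧ φ + *₇φ` on `ℝ⁸`. -/
def Phi8 : Form K 8 := wedge (e1 0) phi8 + psi8

/-- The index set of `V = span{e₁, …, e₇} ⊂ ℝ⁸`. -/
def Vset : Finset (Fin 8) := {1, 2, 3, 4, 5, 6, 7}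

/-- The Hodge star `*₇` of `V ⊂ ℝ⁸` (volume form `e^{1⋯7}`), acting on forms on `ℝ⁸`
annihilated by `i(e₀)`. -/
def star7 (α : Form K 8) : Form K 8 :=
  fun t => if (0 : Fin 8) ∈ t then 0 else signMerge (Vset \ t) t * α (Vset \ t)

/-- `α` is (the pullback of) a form on `V`, i.e. `i(e₀) α = 0`. -/
def onV (α : Form K 8) : Prop := ∀ s, (0 : Fin 8) ∈ s → α s = 0

/-- `λ²(α) = ½ (e⁰ ∧ α + i(α♯) φ)` for `α ∈ V*`. -/
def lambda2 (α : Form K 8) : Form K 8 :=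
  (2 : K)⁻¹ • (wedge (e1 0) α + iprod (sharp1 α) phi8)

/-- `λ⁴(α) = (1/√8) (e⁰ ∧ i(α♯) *₇φ − α ∧ φ)` for `α ∈ V*`. -/
def lambda4 (α : Form K 8) : Form K 8 :=
  (algebraMap ℝ K (Real.sqrt 8))⁻¹ • (wedge (e1 0) (iprod (sharp1 α) psi8) - wedge α phi8)

/-- `λ⁶(α) = *₈ λ²(α)` for `α ∈ V*`. -/
def lambda6 (α : Form K 8) : Form K 8 := hstar (lambda2 α)

/-- The projection `π²₇(α) = (α + *₈(Φ ∧ α))/4` onto `Λ²₇`. -/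
def pi27 (α : Form K 8) : Form K 8 := (4 : K)⁻¹ • (α + hstar (wedge Phi8 α))

/-- The projection `π⁴₇(β) = Σ_{μ=1}^{7} ⟨β, λ⁴(e^μ)⟩ λ⁴(e^μ)` onto `Λ⁴₇`. -/
def pi47 (β : Form K 8) : Form K 8 :=
  ∑ μ : Fin 7, inner' β (lambda4 (e1 μ.succ)) • lambda4 (e1 μ.succ)

/-- `τ(u₀,u₁,u₂,u₃) = Σ_{μ=1}^{7} λ⁴(e^μ)(u₀,u₁,u₂,u₃) ⬝ λ⁴(e^μ) = π⁴₇(u₀♭∧u₁♭∧u₂♭∧u₃♭)`. -/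
def tau4 (u : Fin 4 → (Fin 8 → K)) : Form K 8 :=
  ∑ μ : Fin 7, evalForm (lambda4 (e1 μ.succ)) u • lambda4 (e1 μ.succ)

/-- Partial derivative `∂f^a/∂x^j` at `x`. -/
def pd {m p : ℕ} (f : (Fin m → ℝ) → (Fin p → ℝ)) (x : Fin m → ℝ) (j : Fin m) (a : Fin p) : ℝ :=
  fderiv ℝ f x (Pi.single j 1) a


/-! Graph setting for Cayley `T⁴`-fibrations: `ℝ⁸ = ℝ⁴ × ℝ⁴` with coordinates
`(x⁰,…,x³,y⁴,…,y⁷)`. -/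

/-- The index of the coordinate `x^j` in `ℝ⁸`. -/
def xi (j : Fin 4) : Fin 8 := Fin.castAdd 4 j

/-- The index of the coordinate `y^a` (`a = 4,…,7` shifted to `0,…,3`) in `ℝ⁸`. -/
def yi (a : Fin 4) : Fin 8 := a.addNat 4

/-- The spanning tangent vectors `v_j = ∂_j + Σ_a (∂f^a/∂x^j) ∂_a` of the graph of `f`. -/
def vG (f : (Fin 4 → ℝ) → (Fin 4 → ℝ)) (x : Fin 4 → ℝ) (j : Fin 4) : Fin 8 → ℝ :=
  Pi.single (xi j) 1 + ∑ a : Fin 4, pd f x j a • (Pi.single (yi a) 1 : Fin 8 → ℝ)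

/-- The real 2-form `γ` with `F_∇^S = √-1 γ`, i.e. `γ = Σ_{j,a} (∂f^a/∂x^j) dx^j ∧ dy^a`. -/
def gammaS (f : (Fin 4 → ℝ) → (Fin 4 → ℝ)) (x : Fin 4 → ℝ) : Form ℝ 8 :=
  ∑ j : Fin 4, ∑ a : Fin 4, pd f x j a • wedge (e1 (xi j)) (e1 (yi a))

/-- The `√-1 ℝ`-valued curvature 2-form
`F_∇^S = √-1 Σ_{j,a} (∂f^a/∂x^j) dx^j ∧ dy^a` of the real Fourier–Mukai transform. -/
def FS8 (f : (Fin 4 → ℝ) → (Fin 4 → ℝ)) (x : Fin 4 → ℝ) : Form ℂ 8 :=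
  fun s => Complex.I * (gammaS f x s : ℂ)

/-! Since `*₇ = *₈ ∘ (e⁰ ∧ ·)`, the pairing `⟨*₇α, β⟩` is the coefficient of `e^{0⋯7}` in
`e⁰ ∧ α ∧ β`. After expanding `F²` and `F³` as `e⁰ ∧ (⋯) + (⋯)`, both identities compare such
top-degree coefficients, so they amount to reordering wedge factors, using that `i(e_μ)` is an
antiderivation. Beyond `*₇φ = ψ`, the `G₂`-structure enters only through the contraction identity
`Σ_μ ⟨i(e_μ)φ, α⟩ ⟨i(e_μ)φ, β⟩ = ⟨α, β⟩ + ⟨ψ, α ∧ β⟩` for 2-forms on `V`, equivalently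
`*₇(ψ ∧ *₇(ψ ∧ α)) = α + *₇(φ ∧ α)`; it yields `2 π²₇(e⁰ ∧ α + β) = λ²(α + *₇(ψ ∧ β))`, and
`√8 π⁴₇(e⁰ ∧ α + β) = λ⁴(*₇(α ∧ φ - φ ∧ *₇β))` is the analogous formula for 4-forms. -/

variable {𝕜 : Type*} [NormedField 𝕜]

lemma signMerge_eq_prod (s t : Finset (Fin n)) :
    (signMerge s t : 𝕜) = ∏ i ∈ s, ∏ j ∈ t, if j < i then -1 else 1 := by
  rw [signMerge, ← Finset.prod_product', Finset.prod_ite, Finset.prod_const, Finset.prod_const_one,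
    mul_one]

lemma signMerge_union_left {s t : Finset (Fin n)} (h : Disjoint s t) (u : Finset (Fin n)) :
    (signMerge (s ∪ t) u : 𝕜) = signMerge s u * signMerge t u := by
  simp only [signMerge_eq_prod, Finset.prod_union h]

lemma signMerge_union_right (s : Finset (Fin n)) {t u : Finset (Fin n)} (h : Disjoint t u) :
    (signMerge s (t ∪ u) : 𝕜) = signMerge s t * signMerge s u := by
  simp only [signMerge_eq_prod, Finset.prod_union h, Finset.prod_mul_distrib]

lemma signMerge_insert_left {i : Fin n} {s : Finset (Fin n)} (h : i ∉ s) (u : Finset (Fin n)) :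
    (signMerge (insert i s) u : 𝕜) = signMerge {i} u * signMerge s u := by
  rw [Finset.insert_eq, signMerge_union_left (Finset.disjoint_singleton_left.mpr h)]

lemma signMerge_insert_right (s : Finset (Fin n)) {i : Fin n} {t : Finset (Fin n)} (h : i ∉ t) :
    (signMerge s (insert i t) : 𝕜) = signMerge s {i} * signMerge s t := by
  rw [Finset.insert_eq, signMerge_union_right _ (Finset.disjoint_singleton_left.mpr h)]

lemma signMerge_mul_self (s t : Finset (Fin n)) :
    (signMerge s t : 𝕜) * signMerge s t = 1 := by
  rw [signMerge, ← mul_pow, neg_one_mul, neg_neg, one_pow]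

lemma signMerge_mul_swap {s t : Finset (Fin n)} (h : Disjoint s t) :
    (signMerge s t : 𝕜) * signMerge t s = (-1) ^ (s.card * t.card) := by
  have swap : (signMerge t s : 𝕜) = ∏ i ∈ s, ∏ j ∈ t, if i < j then -1 else 1 := by
    rw [signMerge_eq_prod, Finset.prod_comm]
  have opposite : ∀ i ∈ s, ∀ j ∈ t,
      ((if j < i then -1 else 1) * if i < j then -1 else 1 : 𝕜) = -1 := by
    intro i hi j hj
    rcases lt_or_gt_of_ne (Finset.disjoint_iff_ne.mp h i hi j hj) with hij | hij <;>
      simp [hij, hij.not_gt]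
  simp only [signMerge_eq_prod s, swap, ← Finset.prod_mul_distrib]
  rw [Finset.prod_congr rfl fun i hi => Finset.prod_congr rfl (opposite i hi)]
  simp only [Finset.prod_const, ← pow_mul, mul_comm]

lemma signMerge_swap_of_even {s t : Finset (Fin n)} (h : Disjoint s t)
    (hst : Even (s.card * t.card)) : (signMerge t s : 𝕜) = signMerge s t := by
  have product : (signMerge s t : 𝕜) * signMerge t s = 1 := by
    rw [signMerge_mul_swap h, hst.neg_one_pow]
  calc (signMerge t s : 𝕜)
      = signMerge s t * signMerge s t * signMerge t s := by rw [signMerge_mul_self, one_mul]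
    _ = signMerge s t := by rw [mul_assoc, product, mul_one]

lemma signMerge_singleton_left (i : Fin n) (t : Finset (Fin n)) :
    (signMerge {i} t : 𝕜) = (-1) ^ (t.filter (· < i)).card := by
  rw [signMerge_eq_prod, Finset.prod_singleton, Finset.prod_ite, Finset.prod_const,
    Finset.prod_const_one, mul_one]

lemma wedge_apply_eq_sum_swap (α β : Form 𝕜 n) (u : Finset (Fin n)) :
    wedge α β u = ∑ s ∈ u.powerset, signMerge (u \ s) s * α (u \ s) * β s := by
  refine Finset.sum_nbij' (u \ ·) (u \ ·) ?_ ?_ ?_ ?_ ?_ <;> intro s hs <;>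
    have hsu := Finset.mem_powerset.mp hs <;>
    simp [Finset.sdiff_sdiff_eq_self hsu]

/-- The wedge product as a bilinear map. -/
def wedgeHom : Form 𝕜 n →ₗ[𝕜] Form 𝕜 n →ₗ[𝕜] Form 𝕜 n :=
  LinearMap.mk₂ 𝕜 wedge
    (fun α α' β => by
      ext u; simp only [wedge, Pi.add_apply, mul_add, add_mul, Finset.sum_add_distrib])
    (fun c α β => by
      ext u; simp only [wedge, Pi.smul_apply, smul_eq_mul, Finset.mul_sum]
      exact Finset.sum_congr rfl fun _ _ => by ring)
    (fun α β β' => by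
      ext u; simp only [wedge, Pi.add_apply, mul_add, Finset.sum_add_distrib])
    (fun c α β => by
      ext u; simp only [wedge, Pi.smul_apply, smul_eq_mul, Finset.mul_sum]
      exact Finset.sum_congr rfl fun _ _ => by ring)

lemma add_wedge (α α' β : Form 𝕜 n) : wedge (α + α') β = wedge α β + wedge α' β :=
  wedgeHom.map_add₂ α α' β

lemma wedge_add (α β β' : Form 𝕜 n) : wedge α (β + β') = wedge α β + wedge α β' :=
  map_add (wedgeHom α) β β'

lemma sub_wedge (α α' β : Form 𝕜 n) : wedge (α - α') β = wedge α β - wedge α' β :=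
  wedgeHom.map_sub₂ α α' β

lemma wedge_sub (α β β' : Form 𝕜 n) : wedge α (β - β') = wedge α β - wedge α β' :=
  map_sub (wedgeHom α) β β'

lemma smul_wedge (c : 𝕜) (α β : Form 𝕜 n) : wedge (c • α) β = c • wedge α β :=
  wedgeHom.map_smul₂ c α β

lemma wedge_smul (c : 𝕜) (α β : Form 𝕜 n) : wedge α (c • β) = c • wedge α β :=
  map_smul (wedgeHom α) c β

lemma wedge_zero (α : Form 𝕜 n) : wedge α 0 = 0 :=
  map_zero (wedgeHom α)

lemma wedge_assoc (α β γ : Form 𝕜 n) : wedge (wedge α β) γ = wedge α (wedge β γ) := by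
  ext u
  simp only [wedge, Finset.mul_sum, Finset.sum_mul, Finset.sum_sigma']
  refine Finset.sum_nbij' (fun p => ⟨p.2, p.1 \ p.2⟩) (fun p => ⟨p.1 ∪ p.2, p.1⟩) ?_ ?_ ?_ ?_ ?_
  · rintro ⟨s, a⟩ h
    simp only [Finset.mem_sigma, Finset.mem_powerset] at h ⊢
    exact ⟨h.2.trans h.1, Finset.sdiff_subset_sdiff h.1 le_rfl⟩
  · rintro ⟨a, b⟩ h
    simp only [Finset.mem_sigma, Finset.mem_powerset] at h ⊢
    exact ⟨Finset.union_subset h.1 (h.2.trans Finset.sdiff_subset), Finset.subset_union_left⟩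
  · rintro ⟨s, a⟩ h
    simp only [Finset.mem_sigma, Finset.mem_powerset] at h
    simp [Finset.union_sdiff_of_subset h.2]
  · rintro ⟨a, b⟩ h
    simp only [Finset.mem_sigma, Finset.mem_powerset, Finset.subset_sdiff] at h
    simp [Finset.union_sdiff_cancel_left h.2.2.symm]
  · rintro ⟨s, a⟩ h
    simp only [Finset.mem_sigma, Finset.mem_powerset] at h
    have split_left : (signMerge s (u \ s) : 𝕜) =
        signMerge a (u \ s) * signMerge (s \ a) (u \ s) := by
      rw [← signMerge_union_left Finset.disjoint_sdiff, Finset.union_sdiff_of_subset h.2]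
    have split_right : (signMerge a (u \ a) : 𝕜) =
        signMerge a (s \ a) * signMerge a (u \ s) := by
      rw [← signMerge_union_right _ (Finset.disjoint_sdiff.mono_left Finset.sdiff_subset)]
      congr 1
      grind
    have remainder : (u \ a) \ (s \ a) = u \ s := by grind
    simp only [remainder, split_left, split_right]
    ring

lemma wedge_comm_of_even {k : ℕ} {α : Form 𝕜 n} (hα : isGrade k α) (β : Form 𝕜 n)
    (hk : Even k := by decide) : wedge α β = wedge β α := by
  ext u
  rw [wedge_apply_eq_sum_swap β α, wedge]
  refine Finset.sum_congr rfl fun s _ => ?_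
  by_cases hs : s.card = k
  · rw [signMerge_swap_of_even Finset.disjoint_sdiff (hs ▸ hk.mul_right _)]
    ring
  · simp only [hα s hs, mul_zero, zero_mul]

lemma wedge_left_comm_of_even {k : ℕ} {α : Form 𝕜 n} (hα : isGrade k α) (β γ : Form 𝕜 n)
    (hk : Even k := by decide) : wedge α (wedge β γ) = wedge β (wedge α γ) := by
  rw [← wedge_assoc, wedge_comm_of_even hα β hk, wedge_assoc]

lemma isGrade.add {k : ℕ} {α β : Form 𝕜 n} (hα : isGrade k α) (hβ : isGrade k β) :
    isGrade k (α + β) := fun s hs => by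
  rw [Pi.add_apply, hα s hs, hβ s hs, add_zero]

lemma isGrade.sub {k : ℕ} {α β : Form 𝕜 n} (hα : isGrade k α) (hβ : isGrade k β) :
    isGrade k (α - β) := fun s hs => by
  rw [Pi.sub_apply, hα s hs, hβ s hs, sub_zero]

lemma isGrade.smul {k : ℕ} {α : Form 𝕜 n} (c : 𝕜) (hα : isGrade k α) : isGrade k (c • α) :=
  fun s hs => by rw [Pi.smul_apply, hα s hs, smul_zero]

lemma isGrade.wedge {p q : ℕ} {α β : Form 𝕜 n} (hα : isGrade p α) (hβ : isGrade q β) :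
    isGrade (p + q) (wedge α β) := by
  intro u hu
  refine Finset.sum_eq_zero fun s hs => ?_
  by_cases hp : s.card = p
  · have hq : (u \ s).card ≠ q := fun hq => hu <| by
      rw [← hp, ← hq, add_comm, Finset.card_sdiff_add_card_eq_card (Finset.mem_powerset.mp hs)]
    rw [hβ _ hq, mul_zero]
  · rw [hα s hp, mul_zero, zero_mul]

lemma e1_eq_single (i : Fin n) : (e1 i : Form 𝕜 n) = Pi.single {i} 1 := by
  ext s
  simp only [e1, Pi.single_apply]

lemma isGrade_e1 (i : Fin n) : isGrade 1 (e1 i : Form 𝕜 n) := fun s hs =>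
  if_neg fun h => hs <| by rw [h, Finset.card_singleton]

lemma isGrade.ext_one {α β : Form 𝕜 n} (hα : isGrade 1 α) (hβ : isGrade 1 β)
    (h : ∀ i, α {i} = β {i}) : α = β := by
  ext s
  by_cases hs : s.card = 1
  · obtain ⟨i, rfl⟩ := Finset.card_eq_one.mp hs
    exact h i
  · rw [hα s hs, hβ s hs]

lemma wedge_single_empty (α : Form 𝕜 n) (c : 𝕜) : wedge α (Pi.single ∅ c) = c • α := by
  ext u
  rw [wedge_apply_eq_sum_swap, Finset.sum_eq_single ∅] <;>
    simp +contextual [signMerge_eq_prod, mul_comm]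

lemma single_empty_wedge (c : 𝕜) (α : Form 𝕜 n) : wedge (Pi.single ∅ c) α = c • α := by
  ext u
  rw [wedge, Finset.sum_eq_single ∅] <;>
    simp +contextual [signMerge_eq_prod]

lemma e1_wedge_apply (i : Fin n) (α : Form 𝕜 n) (u : Finset (Fin n)) :
    wedge (e1 i) α u = if i ∈ u then signMerge {i} (u \ {i}) * α (u \ {i}) else 0 := by
  simp only [wedge, e1_eq_single, Pi.single_apply, mul_ite, mul_one, mul_zero, ite_mul, zero_mul,
    Finset.sum_ite_eq', Finset.mem_powerset, Finset.singleton_subset_iff]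

lemma e1_wedge_e1_wedge (i : Fin n) (α : Form 𝕜 n) : wedge (e1 i) (wedge (e1 i) α) = 0 := by
  ext u
  simp [e1_wedge_apply]

lemma iprodB_apply_of_notMem {μ : Fin n} {t : Finset (Fin n)} (h : μ ∉ t) (α : Form 𝕜 n) :
    iprodB μ α t = signMerge {μ} t * α (insert μ t) := by
  rw [iprodB, if_neg h, signMerge_singleton_left]

lemma isGrade.iprodB {k : ℕ} {α : Form 𝕜 n} (hα : isGrade (k + 1) α) (μ : Fin n) :
    isGrade k (iprodB μ α) := by
  intro t ht
  by_cases h : μ ∈ t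
  · exact if_pos h
  · rw [iprodB_apply_of_notMem h, hα _ (by rwa [Finset.card_insert_of_notMem h, Ne,
      Nat.add_right_cancel_iff]), mul_zero]

lemma iprodB_of_isGrade_one {α : Form 𝕜 n} (hα : isGrade 1 α) (μ : Fin n) :
    iprodB μ α = Pi.single ∅ (α {μ}) := by
  ext t
  rcases t.eq_empty_or_nonempty with rfl | ht
  · simp [iprodB]
  · rw [Pi.single_eq_of_ne ht.ne_empty]
    exact hα.iprodB μ t ht.card_ne_zero

lemma iprodB_wedge_apply_of_notMem {p : ℕ} {α : Form 𝕜 n} (hα : isGrade p α) (β : Form 𝕜 n)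
    {μ : Fin n} {u : Finset (Fin n)} (hu : μ ∉ u) :
    iprodB μ (wedge α β) u =
      wedge (iprodB μ α) β u + (-1) ^ p * wedge α (iprodB μ β) u := by
  rw [iprodB_apply_of_notMem hu, wedge, Finset.sum_powerset_insert hu, add_comm, mul_add]
  simp only [wedge, Finset.mul_sum]
  congr 1 <;> refine Finset.sum_congr rfl fun s hs => ?_ <;>
    have hsu := Finset.mem_powerset.mp hs <;>
    have hμs : μ ∉ s := fun h => hu (hsu h) <;>
    have hμus : μ ∉ u \ s := fun h => hu (Finset.sdiff_subset h) <;>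
    have split : (signMerge {μ} u : 𝕜) = signMerge {μ} s * signMerge {μ} (u \ s) := by
      rw [← signMerge_union_right _ Finset.disjoint_sdiff, Finset.union_sdiff_of_subset hsu]
  · rw [iprodB_apply_of_notMem hμs, Finset.insert_sdiff_insert, Finset.sdiff_insert_of_notMem hu,
      signMerge_insert_left hμs, split]
    linear_combination signMerge {μ} s * signMerge s (u \ s) * α (insert μ s) * β (u \ s) *
      signMerge_mul_self (𝕜 := 𝕜) {μ} (u \ s)
  · rw [iprodB_apply_of_notMem hμus, Finset.insert_sdiff_of_notMem _ hμs,
      signMerge_insert_right _ hμus, split]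
    by_cases hs : s.card = p
    · have swap : (signMerge {μ} s : 𝕜) * signMerge s {μ} = (-1) ^ p := by
        rw [signMerge_mul_swap (Finset.disjoint_singleton_left.mpr hμs), Finset.card_singleton,
          one_mul, hs]
      linear_combination signMerge {μ} (u \ s) * signMerge s (u \ s) * α s *
        β (insert μ (u \ s)) * swap
    · simp only [hα s hs, mul_zero, zero_mul]

lemma iprodB_wedge_apply_insert {p : ℕ} {α : Form 𝕜 n} (hα : isGrade p α) (β : Form 𝕜 n)
    {μ : Fin n} {u : Finset (Fin n)} (hu : μ ∉ u) :
    wedge (iprodB μ α) β (insert μ u) + (-1) ^ p * wedge α (iprodB μ β) (insert μ u) = 0 := by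
  have left : wedge (iprodB μ α) β (insert μ u) = ∑ s ∈ u.powerset,
      signMerge s (insert μ (u \ s)) * (signMerge {μ} s * α (insert μ s)) *
        β (insert μ (u \ s)) := by
    rw [wedge, Finset.sum_powerset_insert hu, add_eq_left.mpr]
    · refine Finset.sum_congr rfl fun s hs => ?_
      have hμs : μ ∉ s := fun h => hu (Finset.mem_powerset.mp hs h)
      rw [Finset.insert_sdiff_of_notMem _ hμs, iprodB_apply_of_notMem hμs]
    · simp [iprodB]
  have right : wedge α (iprodB μ β) (insert μ u) = ∑ s ∈ u.powerset,
      signMerge (insert μ s) (u \ s) * α (insert μ s) *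
        (signMerge {μ} (u \ s) * β (insert μ (u \ s))) := by
    rw [wedge, Finset.sum_powerset_insert hu, add_eq_right.mpr]
    · refine Finset.sum_congr rfl fun s _ => ?_
      have hμus : μ ∉ u \ s := fun h => hu (Finset.sdiff_subset h)
      rw [Finset.insert_sdiff_insert, Finset.sdiff_insert_of_notMem hu,
        iprodB_apply_of_notMem hμus]
    · refine Finset.sum_eq_zero fun s hs => ?_
      have hμs : μ ∉ s := fun h => hu (Finset.mem_powerset.mp hs h)
      simp [iprodB, hμs]
  rw [left, right, Finset.mul_sum, ← Finset.sum_add_distrib]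
  refine Finset.sum_eq_zero fun s hs => ?_
  have hμs : μ ∉ s := fun h => hu (Finset.mem_powerset.mp hs h)
  have hμus : μ ∉ u \ s := fun h => hu (Finset.sdiff_subset h)
  by_cases hp : (insert μ s).card = p
  · have swap : (signMerge {μ} s : 𝕜) * signMerge s {μ} = (-1) ^ s.card := by
      rw [signMerge_mul_swap (Finset.disjoint_singleton_left.mpr hμs), Finset.card_singleton,
        one_mul]
    rw [signMerge_insert_right _ hμus, signMerge_insert_left hμs, ← hp,
      Finset.card_insert_of_notMem hμs, pow_succ]
    linear_combination signMerge s (u \ s) * α (insert μ s) * β (insert μ (u \ s)) *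
      (swap - (-1) ^ s.card * signMerge_mul_self (𝕜 := 𝕜) {μ} (u \ s))
  · simp only [hα _ hp, mul_zero, zero_mul, add_zero]

lemma iprodB_wedge {p : ℕ} {α : Form 𝕜 n} (hα : isGrade p α) (μ : Fin n) (β : Form 𝕜 n) :
    iprodB μ (wedge α β) =
      wedge (iprodB μ α) β + (-1 : 𝕜) ^ p • wedge α (iprodB μ β) := by
  ext u
  by_cases hu : μ ∈ u
  · rw [iprodB, if_pos hu, ← Finset.insert_erase hu]
    exact (iprodB_wedge_apply_insert hα β (Finset.notMem_erase μ u)).symm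
  · exact iprodB_wedge_apply_of_notMem hα β hu

lemma inner'_comm (α β : Form 𝕜 n) : inner' α β = inner' β α :=
  dotProduct_comm α β

lemma inner'_single (α : Form 𝕜 n) (s : Finset (Fin n)) : inner' α (Pi.single s 1) = α s :=
  dotProduct_single_one α s

lemma inner'_e1 (α : Form 𝕜 n) (i : Fin n) : inner' α (e1 i) = α {i} := by
  rw [e1_eq_single, inner'_single]

lemma ext_inner' {α α' : Form 𝕜 n} (h : ∀ β, inner' α β = inner' α' β) : α = α' := by
  ext s
  simpa only [inner'_single] using h (Pi.single s 1)

lemma inner'_e1_wedge (μ : Fin n) (α β : Form 𝕜 n) :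
    inner' (wedge (e1 μ) α) β = inner' α (iprodB μ β) := by
  have left : inner' (wedge (e1 μ) α) β = ∑ s with μ ∈ s,
      signMerge {μ} (s.erase μ) * α (s.erase μ) * β s := by
    simp only [inner', e1_wedge_apply, ite_mul, zero_mul, Finset.sum_filter,
      Finset.sdiff_singleton_eq_erase]
  have right : inner' α (iprodB μ β) = ∑ s with μ ∉ s,
      α s * (signMerge {μ} s * β (insert μ s)) := by
    simp only [inner', iprodB, Finset.sum_filter, mul_ite, mul_zero, signMerge_singleton_left,
      ite_not]
  rw [left, right]
  refine Finset.sum_nbij' (·.erase μ) (insert μ ·) ?_ ?_ ?_ ?_ ?_ <;>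
    intro s hs <;> simp only [Finset.mem_filter, Finset.mem_univ, true_and] at hs
  · simp
  · simp
  · exact Finset.insert_erase hs
  · exact Finset.erase_insert hs
  · rw [Finset.insert_erase hs]
    ring

lemma wedge_hstar_univ (α β : Form 𝕜 n) : wedge α (hstar β) Finset.univ = inner' α β := by
  rw [wedge, Finset.powerset_univ, inner']
  refine Finset.sum_congr rfl fun s _ => ?_
  rw [hstar, ← Finset.compl_eq_univ_sdiff, compl_compl]
  linear_combination α s * β s * signMerge_mul_self (𝕜 := 𝕜) s sᶜ

lemma inner'_hstar_left (α β : Form 𝕜 n) : inner' (hstar α) β = wedge α β Finset.univ := by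
  rw [wedge_apply_eq_sum_swap, Finset.powerset_univ]
  simp only [inner', hstar, Finset.compl_eq_univ_sdiff]

lemma mem_Vset {i : Fin 8} : i ∈ Vset ↔ i ≠ 0 := by
  revert i
  decide

lemma compl_sdiff_zero (t : Finset (Fin 8)) : tᶜ \ {0} = Vset \ t := by
  ext i
  simp only [Finset.mem_sdiff, Finset.mem_compl, Finset.mem_singleton, mem_Vset, and_comm]

lemma card_Vset_sdiff_add_card {t : Finset (Fin 8)} (h : 0 ∉ t) :
    (Vset \ t).card + t.card = 7 :=
  Finset.card_sdiff_add_card_eq_card fun _ hi => mem_Vset.mpr (ne_of_mem_of_not_mem hi h)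

lemma signMerge_zero_left (t : Finset (Fin 8)) : (signMerge {0} t : 𝕜) = 1 := by
  simp [signMerge_eq_prod]

lemma star7_eq_hstar (α : Form 𝕜 8) : star7 α = hstar (wedge (e1 0) α) := by
  ext t
  rw [star7, hstar, e1_wedge_apply, compl_sdiff_zero]
  by_cases ht : (0 : Fin 8) ∈ t
  · simp [ht]
  · have split : (signMerge tᶜ t : 𝕜) = signMerge {0} t * signMerge (Vset \ t) t := by
      rw [← compl_sdiff_zero, ← signMerge_union_left Finset.disjoint_sdiff,
        Finset.union_sdiff_of_subset (by simpa using ht)]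
    simp [ht, split, signMerge_zero_left]

lemma hstar_add (α β : Form 𝕜 n) : hstar (α + β) = hstar α + hstar β := by
  ext t
  simp only [hstar, Pi.add_apply, mul_add]

lemma hstar_smul (c : 𝕜) (α : Form 𝕜 n) : hstar (c • α) = c • hstar α := by
  ext t
  simp only [hstar, Pi.smul_apply, smul_eq_mul, mul_left_comm]

/-- The Hodge star `*₇` as a linear map. -/
def star7Hom : Form 𝕜 8 →ₗ[𝕜] Form 𝕜 8 where
  toFun := star7
  map_add' α β := by simp only [star7_eq_hstar, wedge_add, hstar_add]
  map_smul' c α := by simp only [star7_eq_hstar, wedge_smul, hstar_smul, RingHom.id_apply]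

lemma star7_add (α β : Form 𝕜 8) : star7 (α + β) = star7 α + star7 β :=
  map_add star7Hom α β

lemma star7_sub (α β : Form 𝕜 8) : star7 (α - β) = star7 α - star7 β :=
  map_sub star7Hom α β

lemma star7_smul (c : 𝕜) (α : Form 𝕜 8) : star7 (c • α) = c • star7 α :=
  map_smul star7Hom c α

lemma star7_apply_empty (α : Form 𝕜 8) : star7 α ∅ = wedge (e1 0) α Finset.univ := by
  simp [star7_eq_hstar, hstar, signMerge_eq_prod]

lemma inner'_star7_left (α β : Form 𝕜 8) :
    inner' (star7 α) β = wedge (e1 0) (wedge α β) Finset.univ := by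
  rw [star7_eq_hstar, inner'_hstar_left, wedge_assoc]

lemma isGrade.star7 {k : ℕ} {α : Form 𝕜 8} (hα : isGrade k α) :
    isGrade (7 - k) (star7 α) := by
  intro t ht
  by_cases h : (0 : Fin 8) ∈ t
  · exact if_pos h
  · have := card_Vset_sdiff_add_card h
    rw [FMpaper.star7, if_neg h, hα _ (by omega), mul_zero]

lemma onV_star7 (α : Form 𝕜 8) : onV (star7 α) := fun _ hs => if_pos hs

lemma onV.add {α β : Form 𝕜 8} (hα : onV α) (hβ : onV β) : onV (α + β) := fun s hs => by
  rw [Pi.add_apply, hα s hs, hβ s hs, add_zero]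

lemma onV.sub {α β : Form 𝕜 8} (hα : onV α) (hβ : onV β) : onV (α - β) := fun s hs => by
  rw [Pi.sub_apply, hα s hs, hβ s hs, sub_zero]

lemma onV.smul (c : 𝕜) {α : Form 𝕜 8} (hα : onV α) : onV (c • α) := fun s hs => by
  rw [Pi.smul_apply, hα s hs, smul_zero]

lemma onV.wedge {α β : Form 𝕜 8} (hα : onV α) (hβ : onV β) : onV (wedge α β) := by
  intro u hu
  refine Finset.sum_eq_zero fun s _ => ?_
  by_cases hs : (0 : Fin 8) ∈ s
  · rw [hα s hs, mul_zero, zero_mul]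
  · rw [hβ _ (Finset.mem_sdiff.mpr ⟨hu, hs⟩), mul_zero]

lemma onV.iprodB_zero {α : Form 𝕜 8} (hα : onV α) : iprodB 0 α = 0 := by
  ext t
  simp [iprodB, hα (insert 0 t)]

lemma onV.inner'_e1_zero_wedge {α β : Form 𝕜 8} (hβ : onV β) :
    inner' (FMpaper.wedge (e1 0) α) β = 0 := by
  rw [inner'_e1_wedge, hβ.iprodB_zero]
  simp [inner']

lemma onV.iprodB_zero_e1_wedge {α : Form 𝕜 8} (hα : onV α) :
    iprodB 0 (FMpaper.wedge (e1 0) α) = α := by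
  rw [iprodB_wedge (isGrade_e1 0), iprodB_of_isGrade_one (isGrade_e1 0), hα.iprodB_zero,
    wedge_zero, smul_zero, add_zero, single_empty_wedge]
  simp [e1]

lemma star7_star7 {α : Form 𝕜 8} (hα : onV α) : star7 (star7 α) = α := by
  ext t
  by_cases ht : (0 : Fin 8) ∈ t
  · rw [hα t ht, onV_star7 _ t ht]
  · have subset : t ⊆ Vset := fun _ hi => mem_Vset.mpr (ne_of_mem_of_not_mem hi ht)
    have zero_notMem : 0 ∉ Vset \ t := fun h => mem_Vset.mp (Finset.sdiff_subset h) rfl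
    have even_card : Even ((Vset \ t).card * t.card) := by
      have := card_Vset_sdiff_add_card ht
      rw [Nat.even_mul, Nat.even_iff, Nat.even_iff]
      omega
    simp only [star7, if_neg ht, if_neg zero_notMem, Finset.sdiff_sdiff_eq_self subset]
    rw [signMerge_swap_of_even Finset.sdiff_disjoint even_card, ← mul_assoc, signMerge_mul_self,
      one_mul]

lemma hstar_eq_e1_wedge_star7 {k : ℕ} {α : Form 𝕜 8} (hα : isGrade k α) (hV : onV α)
    (hk : Even k := by decide) : hstar α = wedge (e1 0) (star7 α) := by
  ext t
  rw [hstar, e1_wedge_apply]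
  by_cases ht : (0 : Fin 8) ∈ t
  · have complement : Vset \ (t \ {0}) = tᶜ := by
      rw [← compl_sdiff_zero]
      grind [Finset.mem_compl]
    have notMem : (0 : Fin 8) ∉ t \ {0} := Finset.notMem_sdiff_of_mem_right (by simp)
    rw [if_pos ht, star7, if_neg notMem, complement, signMerge_zero_left, one_mul]
    by_cases hk' : tᶜ.card = k
    · have sign : (signMerge tᶜ t : 𝕜) = signMerge tᶜ (t \ {0}) := by
        have swap : (signMerge tᶜ {0} : 𝕜) = 1 := by
          rw [signMerge_swap_of_even (Finset.disjoint_singleton_left.mpr (by simpa)),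
            signMerge_zero_left]
          rwa [Finset.card_singleton, one_mul, hk']
        rw [← one_mul (signMerge tᶜ (t \ {0})), ← swap,
          ← signMerge_union_right _ Finset.disjoint_sdiff,
          Finset.union_sdiff_of_subset (Finset.singleton_subset_iff.mpr ht)]
      rw [sign]
    · rw [hα _ hk', mul_zero, mul_zero]
  · rw [if_neg ht, hV _ (Finset.mem_compl.mpr ht), mul_zero]

lemma inner'_star7_star7 (α : Form 𝕜 8) {β : Form 𝕜 8} (hβ : onV β) :
    inner' (star7 α) (star7 β) = inner' α β := by
  rw [star7_eq_hstar, star7_eq_hstar, inner'_hstar_left, wedge_hstar_univ, inner'_e1_wedge,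
    hβ.iprodB_zero_e1_wedge]

lemma star7_apply_singleton {k : ℕ} {α : Form 𝕜 8} (hα : isGrade k α) (μ : Fin 8)
    (hk : Even k := by decide) :
    star7 α {μ} = wedge (e1 0) (wedge (e1 μ) α) Finset.univ := by
  rw [← inner'_e1 (star7 α), inner'_star7_left, wedge_comm_of_even hα _ hk]

lemma star7_wedge_star7_apply_singleton {p q : ℕ} {α β : Form 𝕜 8} (hα : isGrade p α)
    (hβ : isGrade q β) (hV : onV β) (μ : Fin 8) (hpq : Even (p + (7 - q)) := by decide) :
    star7 (wedge α (star7 β)) {μ} = inner' α (iprodB μ β) := by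
  rw [star7_apply_singleton (hα.wedge hβ.star7) μ hpq, ← wedge_assoc (e1 μ), ← inner'_star7_left,
    inner'_star7_star7 _ hV, inner'_e1_wedge]

lemma isGrade_phi8 : isGrade 3 (phi8 : Form 𝕜 8) := by
  intro s hs
  simp only [phi8]
  split_ifs <;> subst_vars <;> simp_all

lemma isGrade_psi8 : isGrade 4 (psi8 : Form 𝕜 8) := by
  intro s hs
  simp only [psi8]
  split_ifs <;> subst_vars <;> simp_all

lemma onV_phi8 : onV (phi8 : Form 𝕜 8) := by
  intro s hs
  simp only [phi8]
  split_ifs <;> subst_vars <;> simp_all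

lemma onV_psi8 : onV (psi8 : Form 𝕜 8) := by
  intro s hs
  simp only [psi8]
  split_ifs <;> subst_vars <;> simp_all

lemma mem_powersetCard_Vset {k : ℕ} {α : Form 𝕜 8} (hα : isGrade k α) (hV : onV α)
    {s : Finset (Fin 8)} (hs : α s ≠ 0) : s ∈ Vset.powersetCard k :=
  Finset.mem_powersetCard.mpr ⟨fun _ hi => mem_Vset.mpr <| ne_of_mem_of_not_mem hi <|
    mt (hV s) hs, not_imp_comm.mp (hα s) hs⟩

lemma inner'_wedge (γ α β : Form 𝕜 n) :
    inner' γ (wedge α β) =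
      ∑ s, ∑ t, if Disjoint s t then signMerge s t * γ (s ∪ t) * α s * β t else 0 := by
  simp only [inner', wedge, Finset.mul_sum]
  rw [Finset.sum_comm' (t' := Finset.univ) (s' := fun s => {u | s ⊆ u}) (by simp)]
  refine Finset.sum_congr rfl fun s _ => ?_
  rw [← Finset.sum_filter]
  refine Finset.sum_nbij' (· \ s) (s ∪ ·) ?_ ?_ ?_ ?_ ?_ <;>
    intro u hu <;> simp only [Finset.mem_filter, Finset.mem_univ, true_and] at hu
  · simpa using Finset.disjoint_sdiff
  · simp
  · exact Finset.union_sdiff_of_subset hu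
  · exact Finset.union_sdiff_cancel_left hu
  · rw [Finset.union_sdiff_of_subset hu]
    ring

lemma ratCast_signMerge (s t : Finset (Fin n)) :
    ((signMerge s t : ℚ) : 𝕜) = signMerge s t := by
  simp [signMerge]

lemma ratCast_phi8 (s : Finset (Fin 8)) : ((phi8 s : ℚ) : 𝕜) = phi8 s := by
  simp [phi8, apply_ite (Rat.cast (K := 𝕜))]

lemma ratCast_psi8 (s : Finset (Fin 8)) : ((psi8 s : ℚ) : 𝕜) = psi8 s := by
  simp [psi8, apply_ite (Rat.cast (K := 𝕜))]

section CharZero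

variable [CharZero 𝕜]

lemma ratCast_iprodB_phi8 (μ : Fin 8) (s : Finset (Fin 8)) :
    ((iprodB μ phi8 s : ℚ) : 𝕜) = iprodB μ phi8 s := by
  simp [iprodB, apply_ite (Rat.cast (K := 𝕜)), ratCast_phi8]

lemma star7_phi8 : star7 (phi8 : Form 𝕜 8) = psi8 := by
  have over_rat : ∀ t : Finset (Fin 8), star7 phi8 t = (psi8 t : ℚ) := by
    decide +kernel
  ext t
  rw [← ratCast_psi8, ← over_rat]
  simp [star7, apply_ite (Rat.cast (K := 𝕜)), ratCast_signMerge, ratCast_phi8]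

lemma star7_psi8 : star7 (psi8 : Form 𝕜 8) = phi8 := by
  rw [← star7_phi8, star7_star7 onV_phi8]

lemma sum_iprodB_phi8_mul_iprodB_phi8 {s t : Finset (Fin 8)} (hs : s ∈ Vset.powersetCard 2)
    (ht : t ∈ Vset.powersetCard 2) :
    ∑ μ, iprodB μ phi8 s * iprodB μ phi8 t = (if s = t then 1 else 0) +
      if Disjoint s t then signMerge s t * psi8 (s ∪ t) else (0 : 𝕜) := by
  -- In indices: `Σ_μ φ_{μij} φ_{μkl} = δ_{ik} δ_{jl} - δ_{il} δ_{jk} + ψ_{ijkl}`, a finite check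
  -- over `ℚ`, where equality is decidable.
  have over_rat : ∀ s ∈ Vset.powersetCard 2, ∀ t ∈ Vset.powersetCard 2,
      ∑ μ, iprodB μ phi8 s * iprodB μ phi8 t = (if s = t then 1 else 0) +
        if Disjoint s t then signMerge s t * psi8 (s ∪ t) else (0 : ℚ) := by
    decide +kernel
  simpa [apply_ite (Rat.cast (K := 𝕜)), ratCast_signMerge, ratCast_psi8, ratCast_iprodB_phi8]
    using congrArg (Rat.cast (K := 𝕜)) (over_rat s hs t ht)

lemma sum_inner'_iprodB_phi8_mul {α β : Form 𝕜 8} (hα : isGrade 2 α) (hαV : onV α)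
    (hβ : isGrade 2 β) (hβV : onV β) :
    ∑ μ, inner' (iprodB μ phi8) α * inner' (iprodB μ phi8) β =
      inner' α β + inner' psi8 (wedge α β) := by
  have expand_left : ∑ μ, inner' (iprodB μ phi8) α * inner' (iprodB μ phi8) β =
      ∑ s, ∑ t, (∑ μ, iprodB μ phi8 s * iprodB μ phi8 t) * (α s * β t) := by
    simp only [inner', Finset.sum_mul_sum]
    rw [Finset.sum_comm]
    refine Finset.sum_congr rfl fun s _ => ?_
    rw [Finset.sum_comm]
    simp only [Finset.sum_mul]
    exact Finset.sum_congr rfl fun t _ => Finset.sum_congr rfl fun μ _ => by ring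
  have expand_right : inner' α β = ∑ s, ∑ t, (if s = t then 1 else 0) * (α s * β t) := by
    simp [inner']
  rw [expand_left, expand_right, inner'_wedge, ← Finset.sum_add_distrib]
  refine Finset.sum_congr rfl fun s _ => ?_
  rw [← Finset.sum_add_distrib]
  refine Finset.sum_congr rfl fun t _ => ?_
  by_cases hs : α s = 0
  · simp [hs]
  by_cases ht : β t = 0
  · simp [ht]
  rw [sum_iprodB_phi8_mul_iprodB_phi8 (mem_powersetCard_Vset hα hαV hs)
    (mem_powersetCard_Vset hβ hβV ht), add_mul]
  congr 1
  split_ifs <;> ring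

end CharZero

lemma inner'_add_left (α α' β : Form 𝕜 n) :
    inner' (α + α') β = inner' α β + inner' α' β :=
  add_dotProduct α α' β

lemma inner'_iprod (v : Fin n → 𝕜) (α β : Form 𝕜 n) :
    inner' (iprod v α) β = ∑ μ, v μ * inner' (iprodB μ α) β := by
  simp only [inner', iprod, Finset.sum_mul, Finset.mul_sum, mul_assoc]
  exact Finset.sum_comm

lemma flat_sharp1 {α : Form 𝕜 n} (hα : isGrade 1 α) : flat (sharp1 α) = α := by
  refine isGrade.ext_one (fun s hs => ?_) hα fun i => ?_
  · rw [flat, Finset.sum_apply]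
    exact Finset.sum_eq_zero fun i _ => by rw [Pi.smul_apply, isGrade_e1 i s hs, smul_zero]
  · simp [flat, sharp1, e1]

lemma inner'_iprod_sharp1 {α : Form 𝕜 n} (hα : isGrade 1 α) (β γ : Form 𝕜 n) :
    inner' (iprod (sharp1 α) β) γ = inner' β (wedge α γ) := by
  have wedge_sum : wedge α γ = ∑ μ, sharp1 α μ • wedge (e1 μ) γ := by
    calc wedge α γ = wedgeHom (∑ μ, sharp1 α μ • e1 μ) γ := by rw [← flat, flat_sharp1 hα]; rfl
      _ = ∑ μ, sharp1 α μ • wedge (e1 μ) γ := by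
        simp only [map_sum, map_smul, LinearMap.sum_apply, LinearMap.smul_apply]; rfl
  calc inner' (iprod (sharp1 α) β) γ
      = ∑ μ, sharp1 α μ * inner' β (wedge (e1 μ) γ) := by
        simp only [inner'_iprod, inner'_comm β, inner'_e1_wedge, inner'_comm γ]
    _ = ∑ μ, inner' β (sharp1 α μ • wedge (e1 μ) γ) :=
        Finset.sum_congr rfl fun μ _ => (dotProduct_smul (sharp1 α μ) β _).symm
    _ = inner' β (wedge α γ) := by
        rw [wedge_sum]
        exact (dotProduct_sum _ _ _).symm

lemma isGrade_single (s : Finset (Fin n)) : isGrade s.card (Pi.single s 1 : Form 𝕜 n) :=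
  fun _ ht => Pi.single_eq_of_ne (fun h => ht (by rw [h])) 1

lemma onV_single {s : Finset (Fin 8)} (hs : 0 ∉ s) : onV (Pi.single s 1 : Form 𝕜 8) :=
  fun _ ht => Pi.single_eq_of_ne (fun h => hs (by rwa [← h])) 1

lemma ext_inner'_of_isGrade_of_onV {k : ℕ} {α α' : Form 𝕜 8} (hα : isGrade k α) (hαV : onV α)
    (hα' : isGrade k α') (hαV' : onV α')
    (h : ∀ β, isGrade k β → onV β → inner' α β = inner' α' β) : α = α' := by
  ext s
  by_cases hk : s.card = k
  · by_cases h0 : (0 : Fin 8) ∈ s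
    · rw [hαV s h0, hαV' s h0]
    · simpa only [inner'_single] using h _ (hk ▸ isGrade_single s) (onV_single h0)
  · rw [hα s hk, hα' s hk]

lemma hstar_Phi8_wedge {α β : Form 𝕜 8} (hα : isGrade 1 α) (hβ : isGrade 2 β) (hV : onV β) :
    hstar (wedge Phi8 (wedge (e1 0) α + β)) =
      star7 (wedge phi8 β) + star7 (wedge psi8 α) + wedge (e1 0) (star7 (wedge psi8 β)) := by
  have vanish : wedge (e1 0) (wedge phi8 (wedge (e1 0) α)) = 0 := by
    rw [← wedge_comm_of_even ((isGrade_e1 0).wedge hα), wedge_assoc, e1_wedge_e1_wedge]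
  rw [Phi8, add_wedge, wedge_add, wedge_add, wedge_assoc, wedge_assoc, vanish, zero_add,
    wedge_left_comm_of_even isGrade_psi8, hstar_add, hstar_add, ← star7_eq_hstar, ← star7_eq_hstar,
    hstar_eq_e1_wedge_star7 (isGrade_psi8.wedge hβ) (onV_psi8.wedge hV), add_assoc]

section CharZero

variable [CharZero 𝕜]

lemma iprod_sharp1_phi8 {α : Form 𝕜 8} (hα : isGrade 1 α) :
    iprod (sharp1 α) phi8 = star7 (wedge psi8 α) := by
  refine ext_inner' fun β => ?_
  rw [inner'_iprod_sharp1 hα, ← star7_psi8, inner'_star7_left, inner'_star7_left, wedge_assoc]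

lemma star7_psi8_wedge_apply_singleton {α : Form 𝕜 8} (hα : isGrade 2 α) (μ : Fin 8) :
    star7 (wedge psi8 α) {μ} = inner' (iprodB μ phi8) α := by
  rw [star7_apply_singleton (isGrade_psi8.wedge hα) μ, inner'_comm, ← inner'_e1_wedge,
    inner'_comm, ← star7_psi8, inner'_star7_left, wedge_left_comm_of_even isGrade_psi8]

lemma star7_psi8_wedge_star7_psi8_wedge {α : Form 𝕜 8} (hα : isGrade 2 α) (hV : onV α) :
    star7 (wedge psi8 (star7 (wedge psi8 α))) = α + star7 (wedge phi8 α) := by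
  have grade_contraction : isGrade 1 (star7 (wedge psi8 α)) := (isGrade_psi8.wedge hα).star7
  refine ext_inner'_of_isGrade_of_onV (isGrade_psi8.wedge grade_contraction).star7 (onV_star7 _)
    (hα.add (isGrade_phi8.wedge hα).star7) (hV.add (onV_star7 _)) fun β hβ hβV => ?_
  calc inner' (star7 (wedge psi8 (star7 (wedge psi8 α)))) β
      = ∑ μ, inner' (iprodB μ phi8) α * inner' (iprodB μ phi8) β := by
        simp only [← iprod_sharp1_phi8 grade_contraction, inner'_iprod, sharp1,
          star7_psi8_wedge_apply_singleton hα]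
    _ = inner' α β + inner' (star7 phi8) (wedge α β) := by
        rw [sum_inner'_iprodB_phi8_mul hα hV hβ hβV, star7_phi8]
    _ = inner' (α + star7 (wedge phi8 α)) β := by
        rw [inner'_add_left, inner'_star7_left, inner'_star7_left, wedge_assoc]

lemma two_smul_pi27 {α β : Form 𝕜 8} (hα : isGrade 1 α) (hβ : isGrade 2 β) (hV : onV β) :
    (2 : 𝕜) • pi27 (wedge (e1 0) α + β) = lambda2 (α + star7 (wedge psi8 β)) := by
  have grade_contraction : isGrade 1 (star7 (wedge psi8 β)) := (isGrade_psi8.wedge hβ).star7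
  rw [pi27, lambda2, iprod_sharp1_phi8 (hα.add grade_contraction), hstar_Phi8_wedge hα hβ hV,
    wedge_add, wedge_add, star7_add, star7_psi8_wedge_star7_psi8_wedge hβ hV]
  match_scalars <;> norm_num

end CharZero

lemma wedge_self_e1_wedge_add (i : Fin n) {α β : Form 𝕜 n} (hα : isGrade 1 α) (hβ : isGrade 2 β) :
    wedge (wedge (e1 i) α + β) (wedge (e1 i) α + β) =
      wedge (e1 i) ((2 : 𝕜) • wedge α β) + wedge β β := by
  have vanish : wedge (e1 i) (wedge α (wedge (e1 i) α)) = 0 := by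
    rw [← wedge_comm_of_even ((isGrade_e1 i).wedge hα), wedge_assoc, e1_wedge_e1_wedge]
  simp only [add_wedge, wedge_add, wedge_assoc, vanish, wedge_smul,
    wedge_comm_of_even hβ (wedge (e1 i) α)]
  module

lemma wedge_wedge_self_e1_wedge_add (i : Fin n) {α β : Form 𝕜 n} (hα : isGrade 1 α)
    (hβ : isGrade 2 β) :
    wedge (wedge (e1 i) α + β) (wedge (wedge (e1 i) α + β) (wedge (e1 i) α + β)) =
      wedge (e1 i) ((3 : 𝕜) • wedge α (wedge β β)) + wedge β (wedge β β) := by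
  have vanish : wedge (e1 i) (wedge α (wedge (e1 i) (wedge α β))) = 0 := by
    rw [← wedge_assoc (e1 i) α, wedge_left_comm_of_even ((isGrade_e1 i).wedge hα), wedge_assoc,
      e1_wedge_e1_wedge]
  simp only [wedge_self_e1_wedge_add i hα hβ, add_wedge, wedge_add, wedge_assoc, vanish, wedge_smul,
    wedge_left_comm_of_even hβ (e1 i), wedge_left_comm_of_even hβ α]
  module

lemma hstar_wedge_wedge_self_e1_wedge_add {α β : Form 𝕜 8} (hα : isGrade 1 α)
    (hβ : isGrade 2 β) (hV : onV β) :
    hstar (wedge (wedge (e1 0) α + β) (wedge (wedge (e1 0) α + β) (wedge (e1 0) α + β))) =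
      wedge (e1 0) (star7 (wedge β (wedge β β))) + (3 : 𝕜) • star7 (wedge α (wedge β β)) := by
  rw [wedge_wedge_self_e1_wedge_add 0 hα hβ, hstar_add, ← star7_eq_hstar, star7_smul,
    hstar_eq_e1_wedge_star7 (hβ.wedge (hβ.wedge hβ)) (hV.wedge (hV.wedge hV)), add_comm]

lemma iprodB_wedge_wedge_self {α β : Form 𝕜 n} (hα : isGrade 1 α) (hβ : isGrade 2 β) (μ : Fin n) :
    iprodB μ (wedge α (wedge β β)) =
      α {μ} • wedge β β + (2 : 𝕜) • wedge β (wedge (iprodB μ β) α) := by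
  rw [← wedge_comm_of_even (hβ.wedge hβ), iprodB_wedge (hβ.wedge hβ), iprodB_wedge hβ,
    iprodB_of_isGrade_one hα, wedge_single_empty, ← wedge_comm_of_even hβ (iprodB μ β), add_wedge,
    smul_wedge, wedge_assoc]
  module

lemma star7_psi8_wedge_star7_wedge_wedge_self [CharZero 𝕜] {α β : Form 𝕜 8} (hα : isGrade 1 α)
    (hαV : onV α) (hβ : isGrade 2 β) (hβV : onV β) :
    star7 (wedge psi8 (star7 (wedge α (wedge β β)))) =
      star7 (star7 (wedge phi8 (wedge β β)) ∅ • star7 α +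
        (2 : 𝕜) • wedge (star7 (wedge α (wedge β phi8))) (star7 β)) := by
  have grade_quintic : isGrade 5 (wedge α (wedge β β)) := hα.wedge (hβ.wedge hβ)
  have grade_product : isGrade 1 (star7 (wedge α (wedge β phi8))) :=
    (hα.wedge (hβ.wedge isGrade_phi8)).star7
  have inner'_psi8 (γ : Form 𝕜 8) :
      inner' γ psi8 = wedge (e1 0) (wedge phi8 γ) Finset.univ := by
    rw [inner'_comm, ← star7_phi8, inner'_star7_left]
  refine isGrade.ext_one (isGrade_psi8.wedge grade_quintic.star7).star7
    ((hα.star7.smul _).add ((grade_product.wedge hβ.star7).smul _)).star7 fun μ => ?_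
  have reorder : wedge phi8 (wedge β (wedge (iprodB μ β) α)) =
      wedge (wedge α (wedge β phi8)) (iprodB μ β) := by
    rw [← wedge_left_comm_of_even hβ phi8, ← wedge_assoc phi8,
      wedge_comm_of_even (isGrade_phi8.wedge (hβ.iprodB μ)), wedge_assoc α, wedge_assoc β,
      wedge_left_comm_of_even hβ α]
  calc star7 (wedge psi8 (star7 (wedge α (wedge β β)))) {μ}
      = inner' (α {μ} • wedge β β + (2 : 𝕜) • wedge β (wedge (iprodB μ β) α)) psi8 := by
        rw [star7_wedge_star7_apply_singleton isGrade_psi8 grade_quintic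
          (hαV.wedge (hβV.wedge hβV)), iprodB_wedge_wedge_self hα hβ, inner'_comm]
    _ = star7 (wedge phi8 (wedge β β)) ∅ * α {μ} +
          2 * inner' (star7 (wedge α (wedge β phi8))) (iprodB μ β) := by
        rw [inner'_psi8, wedge_add, wedge_smul, wedge_smul, reorder, inner'_star7_left,
          star7_apply_empty, wedge_add, wedge_smul, wedge_smul, mul_comm]
        rfl
    _ = star7 (star7 (wedge phi8 (wedge β β)) ∅ • star7 α +
          (2 : 𝕜) • wedge (star7 (wedge α (wedge β phi8))) (star7 β)) {μ} := by
        rw [← star7_wedge_star7_apply_singleton grade_product hβ hβV, star7_add, star7_smul,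
          star7_smul, star7_star7 hαV]
        rfl

lemma onV.iprod (v : Fin 8 → 𝕜) {α : Form 𝕜 8} (hα : onV α) : onV (iprod v α) := by
  intro s hs
  refine Finset.sum_eq_zero fun μ _ => ?_
  simp [iprodB, hα (insert μ s) (Finset.mem_insert_of_mem hs)]

lemma onV_e1_succ (μ : Fin 7) : onV (e1 μ.succ : Form 𝕜 8) := fun _ hs =>
  if_neg fun h => Fin.succ_ne_zero μ <| (Finset.mem_singleton.mp (h ▸ hs)).symm

lemma sum_apply_smul_e1_succ {α : Form 𝕜 8} (hα : isGrade 1 α) (hV : onV α) :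
    ∑ μ : Fin 7, α {μ.succ} • e1 μ.succ = α := by
  conv_rhs => rw [← flat_sharp1 hα, flat, Fin.sum_univ_succ, sharp1, hV {0} (by simp), zero_smul,
      zero_add]
  rfl

lemma inner'_add_sub (α β γ δ : Form 𝕜 n) :
    inner' (α + β) (γ - δ) = inner' α γ - inner' α δ + (inner' β γ - inner' β δ) :=
  (add_dotProduct α β _).trans <|
    congrArg₂ _ (dotProduct_sub α γ δ) (dotProduct_sub β γ δ)

lemma inner'_iprod_psi8_sub_wedge_phi8 [CharZero 𝕜] {α β ξ : Form 𝕜 8}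
    (hβ : isGrade 4 β) (hβV : onV β) (hξ : isGrade 1 ξ) (hξV : onV ξ) :
    inner' (wedge (e1 0) α + β) (wedge (e1 0) (iprod (sharp1 ξ) psi8) - wedge ξ phi8) =
      inner' (star7 (wedge α phi8 - wedge phi8 (star7 β))) ξ := by
  have inner'_first :
      inner' α (iprod (sharp1 ξ) psi8) = wedge (e1 0) (wedge (wedge α phi8) ξ) Finset.univ := by
    rw [inner'_comm, inner'_iprod_sharp1 hξ, ← star7_phi8, inner'_star7_left, wedge_assoc α,
      ← wedge_comm_of_even (isGrade_phi8.wedge hξ), wedge_assoc]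
  have inner'_second : inner' β (wedge ξ phi8) =
      wedge (e1 0) (wedge (wedge phi8 (star7 β)) ξ) Finset.univ := by
    rw [inner'_comm, ← inner'_star7_star7 _ hβV, inner'_star7_left, wedge_assoc phi8,
      ← wedge_comm_of_even (hβ.star7.wedge hξ) phi8, wedge_assoc (star7 β),
      wedge_comm_of_even (hξ.wedge isGrade_phi8)]
  have hψV : onV (iprod (sharp1 ξ) psi8) := onV_psi8.iprod _
  rw [inner'_add_sub, inner'_e1_wedge, hψV.iprodB_zero_e1_wedge,
    (hξV.wedge onV_phi8).inner'_e1_zero_wedge, inner'_comm β (wedge (e1 0) _),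
    hβV.inner'_e1_zero_wedge, inner'_first, inner'_second, inner'_star7_left,
    sub_zero, zero_sub, ← sub_eq_add_neg, sub_wedge, wedge_sub, Pi.sub_apply]

/-- The embedding `λ⁴` as a linear map. -/
def lambda4Hom : Form K 8 →ₗ[K] Form K 8 where
  toFun := lambda4
  map_add' α β := by
    have iprod_add : iprod (sharp1 (α + β)) (psi8 : Form K 8) =
        iprod (sharp1 α) psi8 + iprod (sharp1 β) psi8 := by
      ext t
      simp only [iprod, sharp1, Pi.add_apply, add_mul, Finset.sum_add_distrib]
    simp only [lambda4, iprod_add, wedge_add, add_wedge]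
    module
  map_smul' c α := by
    have iprod_smul : iprod (sharp1 (c • α)) (psi8 : Form K 8) = c • iprod (sharp1 α) psi8 := by
      ext t
      simp only [iprod, sharp1, Pi.smul_apply, smul_eq_mul, mul_assoc, Finset.mul_sum]
    simp only [lambda4, iprod_smul, wedge_smul, smul_wedge, RingHom.id_apply]
    module

lemma sum_smul_lambda4_e1_succ {α : Form K 8} (hα : isGrade 1 α) (hV : onV α) :
    ∑ μ : Fin 7, α {μ.succ} • lambda4 (e1 μ.succ) = lambda4 α := by
  have expand : lambda4Hom (∑ μ : Fin 7, α {μ.succ} • (e1 μ.succ : Form K 8)) =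
      ∑ μ : Fin 7, α {μ.succ} • lambda4Hom (e1 μ.succ : Form K 8) := by
    simp only [map_sum, map_smul]
  rw [sum_apply_smul_e1_succ hα hV] at expand
  exact expand.symm

variable (K) in
lemma charZero_of_normedAlgebra_real : CharZero K :=
  charZero_of_injective_algebraMap (algebraMap ℝ K).injective

lemma sqrt_eight_mul_inner'_lambda4 {α β ξ : Form K 8}
    (hβ : isGrade 4 β) (hβV : onV β) (hξ : isGrade 1 ξ) (hξV : onV ξ) :
    algebraMap ℝ K (Real.sqrt 8) * inner' (wedge (e1 0) α + β) (lambda4 ξ) =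
      inner' (star7 (wedge α phi8 - wedge phi8 (star7 β))) ξ := by
  have := charZero_of_normedAlgebra_real K
  have sqrt_ne_zero : algebraMap ℝ K (Real.sqrt 8) ≠ 0 :=
    (map_ne_zero _).mpr (Real.sqrt_ne_zero'.mpr (by norm_num))
  calc _ = algebraMap ℝ K (Real.sqrt 8) * ((algebraMap ℝ K (Real.sqrt 8))⁻¹ *
        inner' (wedge (e1 0) α + β) (wedge (e1 0) (iprod (sharp1 ξ) psi8) - wedge ξ phi8)) :=
        congrArg _ (dotProduct_smul _ _ _)
    _ = _ := by
        rw [mul_inv_cancel_left₀ sqrt_ne_zero, inner'_iprod_psi8_sub_wedge_phi8 hβ hβV hξ hξV]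

lemma sqrt_eight_smul_pi47 {α β : Form K 8} (hα : isGrade 3 α) (hβ : isGrade 4 β) (hV : onV β) :
    algebraMap ℝ K (Real.sqrt 8) • pi47 (wedge (e1 0) α + β) =
      lambda4 (star7 (wedge α phi8 - wedge phi8 (star7 β))) := by
  have grade_dual : isGrade 1 (star7 (wedge α phi8 - wedge phi8 (star7 β))) :=
    ((hα.wedge isGrade_phi8).sub (isGrade_phi8.wedge hβ.star7)).star7
  calc algebraMap ℝ K (Real.sqrt 8) • pi47 (wedge (e1 0) α + β)
      = ∑ μ : Fin 7, star7 (wedge α phi8 - wedge phi8 (star7 β)) {μ.succ} •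
          lambda4 (e1 μ.succ) := by
        simp only [pi47, Finset.smul_sum, smul_smul, inner'_e1,
          sqrt_eight_mul_inner'_lambda4 hβ hV (isGrade_e1 _) (onV_e1_succ _)]
    _ = lambda4 (star7 (wedge α phi8 - wedge phi8 (star7 β))) :=
        sum_smul_lambda4_e1_succ grade_dual (onV_star7 _)

lemma isGrade_and_onV_of_support_yi {α : Form 𝕜 8}
    (h : ∀ s, α s ≠ 0 → ∃ a : Fin 4, s = {yi a}) : isGrade 1 α ∧ onV α := by
  have zero_notMem : ∀ a : Fin 4, 0 ∉ ({yi a} : Finset (Fin 8)) := by decide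
  constructor <;> refine fun s hs => not_imp_comm.mp (h s) fun ⟨a, ha⟩ => ?_
  · exact hs (ha ▸ Finset.card_singleton _)
  · exact zero_notMem a (ha ▸ hs)

lemma isGrade_and_onV_of_support_xi_yi {α : Form 𝕜 8}
    (h : ∀ s, α s ≠ 0 → ∃ (i : Fin 3) (a : Fin 4), s = {xi i.succ, yi a}) :
    isGrade 2 α ∧ onV α := by
  have pair : ∀ (i : Fin 3) (a : Fin 4),
      ({xi i.succ, yi a} : Finset (Fin 8)).card = 2 ∧
        0 ∉ ({xi i.succ, yi a} : Finset (Fin 8)) := by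
    decide
  constructor <;> refine fun s hs => not_imp_comm.mp (h s) fun ⟨i, a, hia⟩ => ?_
  · exact hs (hia ▸ (pair i a).1)
  · exact (pair i a).2 (hia ▸ hs)

theorem statement10_general {F₁ F₂ : Form K 8} (hF₁ : isGrade 1 F₁) (hF₁V : onV F₁)
    (hF₂ : isGrade 2 F₂) (hF₂V : onV F₂) {F : Form K 8} (hF : F = wedge (e1 0) F₁ + F₂) :
    (2 : K) • pi27 (F - (6 : K)⁻¹ • hstar (wedge F (wedge F F))) =
      lambda2 (star7
        (wedge psi8 F₂ - (6 : K)⁻¹ • wedge F₂ (wedge F₂ F₂) +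
          (1 - (2 : K)⁻¹ * (star7 (wedge phi8 (wedge F₂ F₂))) ∅) • star7 F₁ -
          wedge (star7 (wedge F₁ (wedge F₂ phi8))) (star7 F₂))) ∧
    algebraMap ℝ K (Real.sqrt 8) • pi47 (wedge F F) =
      lambda4 (star7
        ((2 : K) • wedge F₁ (wedge F₂ phi8) - wedge phi8 (star7 (wedge F₂ F₂)))) := by
  have := charZero_of_normedAlgebra_real K
  subst hF
  constructor
  · have split : wedge (e1 0) F₁ + F₂ - (6 : K)⁻¹ • hstar (wedge (wedge (e1 0) F₁ + F₂)
        (wedge (wedge (e1 0) F₁ + F₂) (wedge (e1 0) F₁ + F₂))) =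
        wedge (e1 0) (F₁ - (6 : K)⁻¹ • star7 (wedge F₂ (wedge F₂ F₂))) +
          (F₂ - (2 : K)⁻¹ • star7 (wedge F₁ (wedge F₂ F₂))) := by
      rw [hstar_wedge_wedge_self_e1_wedge_add hF₁ hF₂ hF₂V, wedge_sub, wedge_smul]
      match_scalars <;> norm_num
    have cubic_grade : isGrade 1 (star7 (wedge F₂ (wedge F₂ F₂))) :=
      (hF₂.wedge (hF₂.wedge hF₂)).star7
    have quintic_grade : isGrade 2 (star7 (wedge F₁ (wedge F₂ F₂))) :=
      (hF₁.wedge (hF₂.wedge hF₂)).star7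
    rw [split, two_smul_pi27 (hF₁.sub (cubic_grade.smul _)) (hF₂.sub (quintic_grade.smul _))
      (hF₂V.sub ((onV_star7 _).smul _)), wedge_sub, wedge_smul, star7_sub, star7_smul,
      star7_psi8_wedge_star7_wedge_wedge_self hF₁ hF₁V hF₂ hF₂V]
    congr 1
    simp only [star7_add, star7_sub, star7_smul, star7_star7 hF₁V]
    match_scalars <;> ring
  · rw [wedge_self_e1_wedge_add 0 hF₁ hF₂,
      sqrt_eight_smul_pi47 ((hF₁.wedge hF₂).smul 2) (hF₂.wedge hF₂) (hF₂V.wedge hF₂V),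
      smul_wedge, wedge_assoc]

/-- Lemma 5.4.  For `F₁ ∈ span{e⁴,…,e⁷}`, `F₂ ∈ span{eⁱ ∧ eᵃ}` and
`F = e⁰ ∧ F₁ + F₂`:
`2 π²₇(F - (1/6) *₈F³) = λ²(*₇(*₇φ ∧ F₂ - (1/6)F₂³ + (1 - ½ *₇(φ ∧ F₂²)) *₇F₁
  - *₇(F₁ ∧ F₂ ∧ φ) ∧ *₇F₂))` and
`√8 π⁴₇(F²) = λ⁴(*₇(2 F₁ ∧ F₂ ∧ φ - φ ∧ *₇(F₂²)))`. -/
theorem statement10 (F₁ F₂ : Form ℝ 8)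
    (hF1 : ∀ s, F₁ s ≠ 0 → ∃ a : Fin 4, s = {yi a})
    (hF2 : ∀ s, F₂ s ≠ 0 → ∃ (i : Fin 3) (a : Fin 4), s = {xi i.succ, yi a})
    (F : Form ℝ 8) (hF : F = wedge (e1 0) F₁ + F₂) :
    (2 : ℝ) • pi27 (F - (6 : ℝ)⁻¹ • hstar (wedge F (wedge F F))) =
      lambda2 (star7
        (wedge psi8 F₂ - (6 : ℝ)⁻¹ • wedge F₂ (wedge F₂ F₂) +
          (1 - (2 : ℝ)⁻¹ * (star7 (wedge phi8 (wedge F₂ F₂))) ∅) • star7 F₁ -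
          wedge (star7 (wedge F₁ (wedge F₂ phi8))) (star7 F₂))) ∧
    Real.sqrt 8 • pi47 (wedge F F) =
      lambda4 (star7
        ((2 : ℝ) • wedge F₁ (wedge F₂ phi8) - wedge phi8 (star7 (wedge F₂ F₂)))) := by
  have ⟨grade₁, onV₁⟩ := isGrade_and_onV_of_support_yi hF1
  have ⟨grade₂, onV₂⟩ := isGrade_and_onV_of_support_xi_yi hF2
  exact statement10_general grade₁ onV₁ grade₂ onV₂ hF

end FMpaper
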